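/- For every n ≥ 0 the Hermite function h_n = (𝔞†)ⁿ h₀ satisfies L h_n = (2n+1)·h_n, where (Lx)(t) = −x''(t) + t²·x(t). -/

import Mathlib

open MeasureTheory

/-- The creation operator `𝔞†`: `(𝔞†x)(t) = -x'(t) + t·x(t)`. -/
noncomputable def creation (x : ℝ → ℂ) : ℝ → ℂ := fun t => -deriv x t + (t : ℂ) * x t

/-- The Hermite differential expression `(Lx)(t) = -x''(t) + t²·x(t)`. -/
noncomputable def hermiteL (x : ℝ → ℂ) : ℝ → ℂ :=
  fun t => -deriv (deriv x) t + (t : ℂ) ^ 2 * x t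

/-- The Hermite functions `h₀(t) = e^{−t²/2}`, `h_{n+1} = 𝔞† h_n`. -/
noncomputable def hermiteFun : ℕ → ℝ → ℂ
  | 0 => fun t => Complex.exp (-(t : ℂ) ^ 2 / 2)
  | n + 1 => creation (hermiteFun n)

/-!
Let `𝔞 = d/dt + t` be the annihilation operator. Then `L = 𝔞†𝔞 + 1 = 𝔞𝔞† - 1`, so
`L𝔞† = 𝔞†(𝔞𝔞†) + 𝔞† = 𝔞†(L + 2)`: applying `𝔞†` raises an eigenvalue of `L` by `2`. Since
`𝔞h₀ = 0`, the first factorization gives `Lh₀ = h₀`.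
-/

/-- The annihilation operator `𝔞`: `(𝔞x)(t) = x'(t) + t·x(t)`, the formal adjoint of `creation`,
used to factor `hermiteL`. -/
noncomputable def annihilation (x : ℝ → ℂ) : ℝ → ℂ := fun t => deriv x t + (t : ℂ) * x t

section Ladder

variable {x y : ℝ → ℂ} {t : ℝ}

theorem hasDerivAt_ofReal_mul (hx : DifferentiableAt ℝ x t) :
    HasDerivAt (fun s : ℝ => (s : ℂ) * x s) (x t + t * deriv x t) t :=
  ((hasDerivAt_id t).ofReal_comp.mul hx.hasDerivAt).congr_deriv (by simp)

theorem creation_add_apply (hx : DifferentiableAt ℝ x t) (hy : DifferentiableAt ℝ y t) :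
    creation (x + y) t = creation x t + creation y t := by
  simp only [creation, Pi.add_apply, deriv_add hx hy]
  ring

theorem creation_const_smul (c : ℂ) (x : ℝ → ℂ) : creation (c • x) = c • creation x := by
  ext t
  simp only [creation, Pi.smul_apply, smul_eq_mul, deriv_const_smul_field]
  ring

theorem contDiff_creation {k : WithTop ℕ∞} (hx : ContDiff ℝ (k + 1) x) :
    ContDiff ℝ k (creation x) :=
  hx.deriv'.neg.add (Complex.ofRealCLM.contDiff.mul hx.of_succ)

theorem contDiff_hermiteL {k : WithTop ℕ∞} (hx : ContDiff ℝ (k + 1 + 1) x) :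
    ContDiff ℝ k (hermiteL x) :=
  hx.deriv'.deriv'.neg.add ((Complex.ofRealCLM.contDiff.pow 2).mul hx.of_succ.of_succ)

theorem creation_annihilation_apply (hx : DifferentiableAt ℝ x t)
    (hx' : DifferentiableAt ℝ (deriv x) t) :
    creation (annihilation x) t = hermiteL x t - x t := by
  have hderiv : deriv (annihilation x) t = deriv (deriv x) t + (x t + t * deriv x t) :=
    (hx'.hasDerivAt.add (hasDerivAt_ofReal_mul hx)).deriv
  rw [creation, hderiv, annihilation, hermiteL]
  ring

theorem annihilation_creation_apply (hx : DifferentiableAt ℝ x t)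
    (hx' : DifferentiableAt ℝ (deriv x) t) :
    annihilation (creation x) t = hermiteL x t + x t := by
  have hderiv : deriv (creation x) t = -deriv (deriv x) t + (x t + t * deriv x t) :=
    (hx'.hasDerivAt.neg.add (hasDerivAt_ofReal_mul hx)).deriv
  rw [annihilation, hderiv, creation, hermiteL]
  ring

theorem hermiteL_creation (hx : ContDiff ℝ 3 x) :
    hermiteL (creation x) = creation (hermiteL x) + (2 : ℂ) • creation x := by
  have hx₁ : Differentiable ℝ x := hx.differentiable three_ne_zero
  have hx₂ : Differentiable ℝ (deriv x) := (hx.of_le (by norm_num)).differentiable_deriv_two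
  have hLx : Differentiable ℝ (hermiteL x) :=
    (contDiff_hermiteL (k := 1) (hx.of_le (by norm_num))).differentiable one_ne_zero
  have hcr : ContDiff ℝ 2 (creation x) := contDiff_creation (hx.of_le (by norm_num))
  have hfactor : annihilation (creation x) = hermiteL x + x :=
    funext fun t => annihilation_creation_apply (hx₁ t) (hx₂ t)
  ext t
  calc hermiteL (creation x) t
      = creation (annihilation (creation x)) t + creation x t :=
        sub_eq_iff_eq_add.mp (creation_annihilation_apply
          (hcr.differentiable two_ne_zero t) (hcr.differentiable_deriv_two t)).symm
    _ = creation (hermiteL x) t + creation x t + creation x t := by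
        rw [hfactor, creation_add_apply (hLx t) (hx₁ t)]
    _ = (creation (hermiteL x) + (2 : ℂ) • creation x) t := by
        rw [Pi.add_apply, Pi.smul_apply, two_smul, add_assoc]

theorem hermiteL_creation_of_eq_smul {c : ℂ} (hx : ContDiff ℝ 3 x) (hc : hermiteL x = c • x) :
    hermiteL (creation x) = (c + 2) • creation x := by
  rw [hermiteL_creation hx, hc, creation_const_smul, add_smul]

theorem hermiteL_eq_self_of_annihilation_eq_zero (hx : Differentiable ℝ x)
    (h : annihilation x = 0) : hermiteL x = x := by
  have hderiv : deriv x = fun t : ℝ => -((t : ℂ) * x t) :=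
    funext fun t => eq_neg_of_add_eq_zero_left (congrFun h t)
  have hx' : Differentiable ℝ (deriv x) := by
    rw [hderiv]
    exact fun t => (hasDerivAt_ofReal_mul (hx t)).differentiableAt.neg
  have hzero : creation 0 = 0 := by simpa using creation_const_smul 0 0
  ext t
  have hfactor : creation (annihilation x) t = hermiteL x t - x t :=
    creation_annihilation_apply (hx t) (hx' t)
  rw [h, hzero] at hfactor
  exact sub_eq_zero.mp hfactor.symm

end Ladder

theorem contDiff_hermiteFun (n : ℕ) (k : WithTop ℕ∞) : ContDiff ℝ k (hermiteFun n) := by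
  induction n generalizing k with
  | zero => exact ((Complex.ofRealCLM.contDiff.pow 2).neg.div_const 2).cexp
  | succ n ih => exact contDiff_creation (ih (k + 1))

theorem annihilation_hermiteFun_zero : annihilation (hermiteFun 0) = 0 := by
  ext t
  have hderiv : HasDerivAt (hermiteFun 0) (hermiteFun 0 t * (-(2 * t) / 2)) t := by
    simpa [hermiteFun] using (((hasDerivAt_id t).ofReal_comp.pow 2).neg.div_const 2).cexp
  rw [annihilation, hderiv.deriv, Pi.zero_apply]
  ring

/-- For every `n ≥ 0`, `L h_n = (2n+1)·h_n`. -/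
theorem hermiteL_hermiteFun (n : ℕ) :
    ∀ t : ℝ, hermiteL (hermiteFun n) t = (2 * (n : ℂ) + 1) * hermiteFun n t := by
  suffices heigen : hermiteL (hermiteFun n) = (2 * (n : ℂ) + 1) • hermiteFun n from
    congrFun heigen
  induction n with
  | zero =>
    simpa using hermiteL_eq_self_of_annihilation_eq_zero
      ((contDiff_hermiteFun 0 1).differentiable one_ne_zero) annihilation_hermiteFun_zero
  | succ n ih =>
    have hc : 2 * ((n + 1 : ℕ) : ℂ) + 1 = 2 * (n : ℂ) + 1 + 2 := by
      push_cast
      ring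
    rw [hc]
    exact hermiteL_creation_of_eq_smul (contDiff_hermiteFun n 3) ih
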